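/- Let μ be a Borel probability measure on ℝ and let t ≥ 1 be a real number. Define H_t(z) = t·z + (1−t)·F_μ(z) for z ∈ ℂ⁺. Then there exist a Borel probability measure μ_t on ℝ and an injective analytic map ω_t : ℂ⁺ → ℂ⁺ such that for all z ∈ ℂ⁺: F_{μ_t}(z) = F_μ(ω_t(z)), ω_t(z) = z/t + (1 − 1/t)·F_{μ_t}(z), and H_t(ω_t(z)) = z. -/

import Mathlib

open Complex Filter Set Topology MeasureTheory

/-- The open upper half-plane `ℂ⁺ = {z : ℂ | Im z > 0}`. -/
def UHP : Set ℂ := {z : ℂ | 0 < z.im}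

/-- The Cauchy transform `G_μ(z) = ∫ dμ(t)/(z − t)` of a measure `μ` on `ℝ`. -/
noncomputable def cauchyT (μ : Measure ℝ) (z : ℂ) : ℂ :=
  ∫ t, (z - (t : ℂ))⁻¹ ∂μ

/-- The reciprocal Cauchy transform `F_μ = 1/G_μ`. -/
noncomputable def Fmeas (μ : Measure ℝ) (z : ℂ) : ℂ := (cauchyT μ z)⁻¹


lemma sub_ofReal_ne {z : ℂ} (hz : z ∈ UHP) (x : ℝ) : z - (x : ℂ) ≠ 0 := by
  intro h
  have : (z - (x : ℂ)).im = 0 := by rw [h]; simp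
  simp at this
  exact absurd hz (by simp [UHP, this])

lemma im_le_norm_sub {z : ℂ} (x : ℝ) : z.im ≤ ‖z - (x : ℂ)‖ := by
  have := Complex.im_le_norm (z - (x : ℂ))
  simpa using this

lemma norm_inv_sub_le {z : ℂ} (hz : z ∈ UHP) (x : ℝ) : ‖(z - (x : ℂ))⁻¹‖ ≤ z.im⁻¹ := by
  rw [norm_inv]
  exact inv_anti₀ hz (im_le_norm_sub x)

lemma continuous_inv_sub {z : ℂ} (hz : z ∈ UHP) : Continuous fun x : ℝ => (z - (x : ℂ))⁻¹ :=
  Continuous.inv₀ (by fun_prop) (sub_ofReal_ne hz)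

lemma integrable_inv_sub (μ : Measure ℝ) [IsFiniteMeasure μ] {z : ℂ} (hz : z ∈ UHP) :
    Integrable (fun x : ℝ => (z - (x : ℂ))⁻¹) μ :=
  Integrable.of_bound (continuous_inv_sub hz).aestronglyMeasurable z.im⁻¹
    (ae_of_all _ (norm_inv_sub_le hz))

lemma integrable_sq_inv_sub (μ : Measure ℝ) [IsFiniteMeasure μ] {z : ℂ} (hz : z ∈ UHP) :
    Integrable (fun x : ℝ => ‖(z - (x : ℂ))⁻¹‖ ^ 2) μ := by
  refine Integrable.of_bound ((continuous_inv_sub hz).norm.pow 2).aestronglyMeasurable (z.im⁻¹ ^ 2)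
    (ae_of_all _ fun x => ?_)
  have := norm_inv_sub_le hz x
  rw [Real.norm_of_nonneg (by positivity)]
  gcongr

lemma isOpen_UHP : IsOpen UHP := isOpen_lt continuous_const Complex.continuous_im

lemma convex_UHP : Convex ℝ UHP := convex_halfSpace_im_gt 0

lemma differentiableOn_cauchyT (μ : Measure ℝ) [IsFiniteMeasure μ] :
    DifferentiableOn ℂ (cauchyT μ) UHP := by
  intro z hz
  have h := hasDerivAt_resolventTransform (𝕜 := ℝ) (A := ℂ) (μ := μ) z (by
    rintro ⟨x, -, hx⟩
    apply sub_ofReal_ne hz x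
    rw [← hx]; simp)
  have h2 : cauchyT μ = fun a => - resolventTransform μ a := by
    ext a
    rw [cauchyT, resolventTransform_apply, ← integral_neg]
    congr 1
    ext x
    simp [resolvent]
    rw [← inv_neg]; ring_nf
  rw [h2]
  exact h.neg.differentiableAt.differentiableWithinAt

/-- `J(z) = ∫ |z - x|⁻²`. -/
noncomputable def Jint (μ : Measure ℝ) (z : ℂ) : ℝ := ∫ x : ℝ, ‖(z - (x : ℂ))⁻¹‖ ^ 2 ∂μ

lemma im_inv_sub (z : ℂ) (x : ℝ) : ((z - (x : ℂ))⁻¹).im = - (z.im * ‖(z - (x : ℂ))⁻¹‖ ^ 2) := by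
  rw [Complex.inv_im, norm_inv, inv_pow, ← Complex.normSq_eq_norm_sq]
  simp
  ring

lemma im_cauchyT (μ : Measure ℝ) [IsFiniteMeasure μ] {z : ℂ} (hz : z ∈ UHP) :
    (cauchyT μ z).im = - (z.im * Jint μ z) := by
  have h1 : (cauchyT μ z).im = ∫ x : ℝ, ((z - (x : ℂ))⁻¹).im ∂μ := by
    have := (Complex.imCLM.integral_comp_comm (integrable_inv_sub μ hz))
    simpa [cauchyT] using this.symm
  rw [h1, Jint, ← integral_const_mul, ← integral_neg]
  congr 1
  ext x
  exact im_inv_sub z x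

lemma Jint_pos (μ : Measure ℝ) [IsProbabilityMeasure μ] {z : ℂ} (hz : z ∈ UHP) :
    0 < Jint μ z := by
  rw [Jint, integral_pos_iff_support_of_nonneg (fun x => by positivity)
    (integrable_sq_inv_sub μ hz)]
  have : (Function.support fun x : ℝ => ‖(z - (x : ℂ))⁻¹‖ ^ 2) = univ := by
    ext x
    simpa using sub_ofReal_ne hz x
  rw [this]; simp

lemma im_cauchyT_neg (μ : Measure ℝ) [IsProbabilityMeasure μ] {z : ℂ} (hz : z ∈ UHP) :
    (cauchyT μ z).im < 0 := by
  rw [im_cauchyT μ hz]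
  have := mul_pos (show 0 < z.im from hz) (Jint_pos μ hz)
  linarith

lemma cauchyT_ne (μ : Measure ℝ) [IsProbabilityMeasure μ] {z : ℂ} (hz : z ∈ UHP) :
    cauchyT μ z ≠ 0 := by
  intro h
  have := im_cauchyT_neg μ hz
  rw [h] at this
  simp at this

lemma differentiableOn_Fmeas (μ : Measure ℝ) [IsProbabilityMeasure μ] :
    DifferentiableOn ℂ (Fmeas μ) UHP :=
  (differentiableOn_cauchyT μ).inv fun _ hz => cauchyT_ne μ hz

lemma im_Fmeas_div (μ : Measure ℝ) [IsProbabilityMeasure μ] {z : ℂ} (hz : z ∈ UHP) :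
    (Fmeas μ z).im / z.im = Jint μ z / ‖cauchyT μ z‖ ^ 2 := by
  have h0 : z.im ≠ 0 := ne_of_gt hz
  rw [Fmeas, Complex.inv_im, im_cauchyT μ hz, ← Complex.normSq_eq_norm_sq]
  field_simp

lemma sq_norm_cauchyT_le (μ : Measure ℝ) [IsProbabilityMeasure μ] {z : ℂ} (hz : z ∈ UHP) :
    ‖cauchyT μ z‖ ^ 2 ≤ Jint μ z := by
  have hm : 0 < ‖cauchyT μ z‖ := norm_pos_iff.2 (cauchyT_ne μ hz)
  set m := ‖cauchyT μ z‖ with hmdef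
  have h1 : m ≤ ∫ x : ℝ, ‖(z - (x : ℂ))⁻¹‖ ∂μ := norm_integral_le_integral_norm _
  have h2 : ∫ x : ℝ, ‖(z - (x : ℂ))⁻¹‖ * (2 * m) ∂μ ≤
      ∫ x : ℝ, (‖(z - (x : ℂ))⁻¹‖ ^ 2 + m ^ 2) ∂μ := by
    apply integral_mono ((integrable_inv_sub μ hz).norm.mul_const _)
      ((integrable_sq_inv_sub μ hz).add (integrable_const _))
    intro x
    dsimp
    nlinarith [sq_nonneg (‖(z - (x : ℂ))⁻¹‖ - m)]
  rw [integral_mul_const, integral_add (integrable_sq_inv_sub μ hz) (integrable_const _)] at h2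
  simp only [integral_const, probReal_univ, smul_eq_mul, one_mul] at h2
  change _ ≤ Jint μ z + m ^ 2 at h2
  nlinarith

lemma im_le_im_Fmeas (μ : Measure ℝ) [IsProbabilityMeasure μ] {z : ℂ} (hz : z ∈ UHP) :
    z.im ≤ (Fmeas μ z).im := by
  have hm : 0 < ‖cauchyT μ z‖ := norm_pos_iff.2 (cauchyT_ne μ hz)
  have h := im_Fmeas_div μ hz
  have h2 : 1 ≤ (Fmeas μ z).im / z.im := by
    rw [h, le_div_iff₀ (by positivity), one_mul]
    exact sq_norm_cauchyT_le μ hz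
  rwa [le_div_iff₀ hz, one_mul] at h2

lemma norm_Fmeas_sub_le (μ : Measure ℝ) [IsProbabilityMeasure μ] {z w : ℂ}
    (hz : z ∈ UHP) (hw : w ∈ UHP) :
    ‖Fmeas μ z - Fmeas μ w‖ ≤
      ‖z - w‖ * (((Fmeas μ z).im / z.im + (Fmeas μ w).im / w.im) / 2) := by
  have hm : 0 < ‖cauchyT μ z‖ := norm_pos_iff.2 (cauchyT_ne μ hz)
  have hn : 0 < ‖cauchyT μ w‖ := norm_pos_iff.2 (cauchyT_ne μ hw)
  have h1 : cauchyT μ w - cauchyT μ z =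
      (z - w) * ∫ x : ℝ, (z - (x : ℂ))⁻¹ * (w - (x : ℂ))⁻¹ ∂μ := by
    rw [cauchyT, cauchyT, ← integral_sub (integrable_inv_sub μ hw) (integrable_inv_sub μ hz),
      ← integral_const_mul]
    congr 1
    ext x
    have := sub_ofReal_ne hz x
    have := sub_ofReal_ne hw x
    field_simp
    ring
  have h2 : Fmeas μ z - Fmeas μ w =
      (cauchyT μ w - cauchyT μ z) / (cauchyT μ z * cauchyT μ w) := by
    have := cauchyT_ne μ hz
    have := cauchyT_ne μ hw
    rw [Fmeas, Fmeas]
    field_simp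
  rw [h2, h1, im_Fmeas_div μ hz, im_Fmeas_div μ hw, norm_div, norm_mul, norm_mul, mul_div_assoc]
  refine mul_le_mul_of_nonneg_left ?_ (norm_nonneg _)
  set m := ‖cauchyT μ z‖
  set n := ‖cauchyT μ w‖
  have h3 : ‖∫ x : ℝ, (z - (x : ℂ))⁻¹ * (w - (x : ℂ))⁻¹ ∂μ‖ ≤
      ∫ x : ℝ, (n / (2 * m) * ‖(z - (x : ℂ))⁻¹‖ ^ 2 + m / (2 * n) * ‖(w - (x : ℂ))⁻¹‖ ^ 2) ∂μ := by
    apply norm_integral_le_of_norm_le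
    · exact ((integrable_sq_inv_sub μ hz).const_mul _).add
        ((integrable_sq_inv_sub μ hw).const_mul _)
    · refine ae_of_all _ fun x => ?_
      rw [norm_mul]
      set p := ‖(z - (x : ℂ))⁻¹‖
      set q := ‖(w - (x : ℂ))⁻¹‖
      have : n / (2 * m) * p ^ 2 + m / (2 * n) * q ^ 2 - p * q = (n * p - m * q) ^ 2 / (2 * m * n) := by
        field_simp
        ring
      have : 0 ≤ (n * p - m * q) ^ 2 / (2 * m * n) := by positivity
      linarith
  rw [integral_add ((integrable_sq_inv_sub μ hz).const_mul _)
        ((integrable_sq_inv_sub μ hw).const_mul _), integral_const_mul, integral_const_mul] at h3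
  change _ ≤ n / (2 * m) * Jint μ z + m / (2 * n) * Jint μ w at h3
  rw [div_le_iff₀ (by positivity)]
  refine h3.trans (le_of_eq ?_)
  field_simp

lemma norm_cauchyT_le (μ : Measure ℝ) [IsProbabilityMeasure μ] {z : ℂ} (hz : z ∈ UHP) :
    ‖cauchyT μ z‖ ≤ z.im⁻¹ := by
  have := norm_integral_le_of_norm_le_const (μ := μ) (ae_of_all _ (norm_inv_sub_le hz))
  simpa [cauchyT] using this

lemma tendsto_cauchyT_I (μ : Measure ℝ) [IsProbabilityMeasure μ] :
    Tendsto (fun y : ℝ => (y * I) * cauchyT μ (y * I)) atTop (𝓝 1) := by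
  have h : Tendsto (fun y : ℝ => ∫ x : ℝ, (y * I) * ((y * I) - (x : ℂ))⁻¹ ∂μ) atTop
      (𝓝 (∫ x : ℝ, (1 : ℂ) ∂μ)) := by
    apply tendsto_integral_filter_of_dominated_convergence (fun _ => (1 : ℝ))
    · filter_upwards [eventually_gt_atTop 0] with y hy
      exact (continuous_const.mul
        (continuous_inv_sub (z := y * I) (by simpa [UHP] using hy))).aestronglyMeasurable
    · filter_upwards [eventually_gt_atTop 0] with y hy
      refine ae_of_all _ fun x => ?_
      have := norm_inv_sub_le (z := y * I) (by simpa [UHP] using hy) x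
      rw [norm_mul]
      have h2 : ‖(y : ℂ) * I‖ = y := by simp [abs_of_pos hy]
      have h3 : ((y : ℂ) * I).im = y := by simp
      rw [h3] at this
      rw [h2]
      calc y * _ ≤ y * y⁻¹ := by gcongr
        _ = 1 := by field_simp
    · exact integrable_const _
    · refine ae_of_all _ fun x => ?_
      have h1 : Tendsto (fun y : ℝ => (1 : ℂ) - (x : ℂ) / I * ((y⁻¹ : ℝ) : ℂ)) atTop
          (𝓝 (1 - (x : ℂ) / I * ((0 : ℝ) : ℂ))) := by
        refine tendsto_const_nhds.sub (tendsto_const_nhds.mul ?_)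
        exact (Complex.continuous_ofReal.tendsto _).comp tendsto_inv_atTop_zero
      have h2 := h1.inv₀ (by simp)
      simp only [ofReal_zero, mul_zero, sub_zero, inv_one] at h2
      refine h2.congr' ?_
      filter_upwards [eventually_gt_atTop 0] with y hy
      have h4 := sub_ofReal_ne (z := y * I) (by simpa [UHP] using hy) x
      have h5 : (y : ℂ) ≠ 0 := by exact_mod_cast hy.ne'
      have h6 : (1 : ℂ) - (x : ℂ) / I * ((y⁻¹ : ℝ) : ℂ) = (y * I - x) * (y * I)⁻¹ := by
        push_cast
        field_simp
      rw [h6, mul_inv, inv_inv]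
      ring
  simp only [integral_const_mul] at h
  simpa [cauchyT] using h

lemma tendsto_cauchyT_cocompact (μ : Measure ℝ) [IsProbabilityMeasure μ] {ε : ℝ} (hε : 0 < ε) :
    Tendsto (cauchyT μ) (cocompact ℂ ⊓ 𝓟 {z | ε ≤ z.im}) (𝓝 0) := by
  have h : Tendsto (fun z : ℂ => ∫ x : ℝ, (z - (x : ℂ))⁻¹ ∂μ) (cocompact ℂ ⊓ 𝓟 {z | ε ≤ z.im})
      (𝓝 (∫ x : ℝ, (0 : ℂ) ∂μ)) := by
    have hm : ∀ᶠ z in (cocompact ℂ ⊓ 𝓟 {z : ℂ | ε ≤ z.im}), ε ≤ z.im :=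
      mem_inf_of_right (mem_principal_self _)
    have : (cocompact ℂ).IsCountablyGenerated := by
      rw [← Metric.cobounded_eq_cocompact, ← comap_norm_atTop]
      infer_instance
    apply tendsto_integral_filter_of_dominated_convergence (fun _ => ε⁻¹)
    · filter_upwards [hm] with z hz
      exact (continuous_inv_sub (z := z) (lt_of_lt_of_le hε hz)).aestronglyMeasurable
    · filter_upwards [hm] with z hz
      refine ae_of_all _ fun x => ?_
      exact (norm_inv_sub_le (z := z) (lt_of_lt_of_le hε hz) x).trans (by gcongr)
    · exact integrable_const _
    · refine ae_of_all _ fun x => ?_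
      refine Tendsto.mono_left ?_ inf_le_left
      rw [← Metric.cobounded_eq_cocompact]
      refine tendsto_inv₀_cobounded.comp ?_
      exact tendsto_sub_const_cobounded _
  rw [integral_zero] at h
  exact h



/-- `H_t(w) = t w + (1 - t) F(w)`. -/
noncomputable def Hmap (μ : Measure ℝ) (t : ℝ) (w : ℂ) : ℂ :=
  (t : ℂ) * w + (1 - (t : ℂ)) * Fmeas μ w

lemma im_Hmap (μ : Measure ℝ) (t : ℝ) (w : ℂ) :
    (Hmap μ t w).im = t * w.im - (t - 1) * (Fmeas μ w).im := by
  simp [Hmap]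
  ring

lemma im_Hmap_div (μ : Measure ℝ) (t : ℝ) {w : ℂ} (hw : w ∈ UHP) :
    (Hmap μ t w).im / w.im = t - (t - 1) * ((Fmeas μ w).im / w.im) := by
  have h0 : w.im ≠ 0 := ne_of_gt hw
  rw [im_Hmap]
  field_simp

lemma Hmap_sub (μ : Measure ℝ) (t : ℝ) (w v : ℂ) :
    (t : ℂ) * (w - v) = (Hmap μ t w - Hmap μ t v) + ((t - 1 : ℝ) : ℂ) * (Fmeas μ w - Fmeas μ v) := by
  simp [Hmap]
  ring

lemma Hmap_lower (μ : Measure ℝ) [IsProbabilityMeasure μ] {t : ℝ} (ht : 1 ≤ t) {w v : ℂ}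
    (hw : w ∈ UHP) (hv : v ∈ UHP) :
    ‖w - v‖ * ((Hmap μ t w).im / w.im + (Hmap μ t v).im / v.im) ≤
      2 * ‖Hmap μ t w - Hmap μ t v‖ := by
  have h1 : ‖(t : ℂ) * (w - v)‖ ≤
      ‖Hmap μ t w - Hmap μ t v‖ + ‖((t - 1 : ℝ) : ℂ) * (Fmeas μ w - Fmeas μ v)‖ := by
    rw [Hmap_sub μ t w v]
    exact norm_add_le _ _
  rw [norm_mul, norm_mul, Complex.norm_real, Complex.norm_real,
    Real.norm_of_nonneg (by linarith), Real.norm_of_nonneg (by linarith)] at h1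
  have h2 := mul_le_mul_of_nonneg_left (norm_Fmeas_sub_le μ hw hv) (by linarith : 0 ≤ t - 1)
  rw [im_Hmap_div μ t hw, im_Hmap_div μ t hv]
  linarith

lemma Hmap_upper (μ : Measure ℝ) [IsProbabilityMeasure μ] {t : ℝ} (ht : 1 ≤ t) {w v : ℂ}
    (hw : w ∈ UHP) (hv : v ∈ UHP) (hHw : Hmap μ t w ∈ UHP) (hHv : Hmap μ t v ∈ UHP) :
    ‖Hmap μ t w - Hmap μ t v‖ ≤ 2 * t * ‖w - v‖ := by
  have h0 : Hmap μ t w - Hmap μ t v =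
      (t : ℂ) * (w - v) - ((t - 1 : ℝ) : ℂ) * (Fmeas μ w - Fmeas μ v) := by
    rw [Hmap_sub μ t w v]; ring
  have h1 : ‖Hmap μ t w - Hmap μ t v‖ ≤ ‖(t : ℂ) * (w - v)‖ +
      ‖((t - 1 : ℝ) : ℂ) * (Fmeas μ w - Fmeas μ v)‖ := by
    rw [h0]
    exact norm_sub_le _ _
  rw [norm_mul, norm_mul, Complex.norm_real, Complex.norm_real,
    Real.norm_of_nonneg (by linarith), Real.norm_of_nonneg (by linarith)] at h1
  have h2 := mul_le_mul_of_nonneg_left (norm_Fmeas_sub_le μ hw hv) (by linarith : 0 ≤ t - 1)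
  have h3 : 0 < (Hmap μ t w).im / w.im := div_pos hHw hw
  have h4 : 0 < (Hmap μ t v).im / v.im := div_pos hHv hv
  rw [im_Hmap_div μ t hw] at h3
  rw [im_Hmap_div μ t hv] at h4
  have h5 := norm_nonneg (w - v)
  nlinarith

lemma im_Hmap_le (μ : Measure ℝ) [IsProbabilityMeasure μ] {t : ℝ} (ht : 1 ≤ t) {w : ℂ}
    (hw : w ∈ UHP) : (Hmap μ t w).im ≤ w.im := by
  rw [im_Hmap]
  nlinarith [im_le_im_Fmeas μ hw]

lemma differentiableOn_Hmap (μ : Measure ℝ) [IsProbabilityMeasure μ] (t : ℝ) :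
    DifferentiableOn ℂ (Hmap μ t) UHP := by
  unfold Hmap
  have := differentiableOn_Fmeas μ
  fun_prop

lemma mul_I_mem {y : ℝ} (hy : 0 < y) : (y : ℂ) * I ∈ UHP := by simpa [UHP] using hy

lemma tendsto_Fmeas_I (μ : Measure ℝ) [IsProbabilityMeasure μ] :
    Tendsto (fun y : ℝ => Fmeas μ (y * I) / (y * I)) atTop (𝓝 1) := by
  have h := (tendsto_cauchyT_I μ).inv₀ one_ne_zero
  rw [inv_one] at h
  refine h.congr fun y => ?_
  rw [Fmeas, mul_inv]
  ring

lemma tendsto_Hmap_I (μ : Measure ℝ) [IsProbabilityMeasure μ] (t : ℝ) :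
    Tendsto (fun y : ℝ => Hmap μ t (y * I) / (y * I)) atTop (𝓝 1) := by
  have h := (tendsto_Fmeas_I μ).const_mul (1 - (t : ℂ))
  have h2 := h.const_add (t : ℂ)
  have h3 : (t : ℂ) + (1 - (t : ℂ)) * 1 = 1 := by ring
  rw [h3] at h2
  refine h2.congr' ?_
  filter_upwards [eventually_gt_atTop 0] with y hy
  have h5 : (y : ℂ) ≠ 0 := by exact_mod_cast hy.ne'
  rw [Hmap]
  field_simp

lemma eventually_im_Hmap_I (μ : Measure ℝ) [IsProbabilityMeasure μ] (t : ℝ) :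
    ∀ᶠ y : ℝ in atTop, y / 2 < (Hmap μ t (y * I)).im := by
  have h : Tendsto (fun y : ℝ => (Hmap μ t (y * I) / (y * I)).re) atTop (𝓝 (1 : ℂ).re) :=
    (Complex.continuous_re.tendsto _).comp (tendsto_Hmap_I μ t)
  have h2 := h.eventually (lt_mem_nhds (show (1 / 2 : ℝ) < (1 : ℂ).re by norm_num))
  filter_upwards [h2, eventually_gt_atTop 0] with y h1 hy
  have h5 : (y : ℂ) ≠ 0 := by exact_mod_cast hy.ne'
  have h3 : Hmap μ t (y * I) = (Hmap μ t (y * I) / (y * I)) * (y * I) := by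
    field_simp
  rw [h3]
  simp only [Complex.mul_im, Complex.mul_re, ofReal_re, ofReal_im, I_re, I_im]
  nlinarith

lemma exists_Hmap_eq (μ : Measure ℝ) [IsProbabilityMeasure μ] {t : ℝ} (ht : 1 ≤ t) :
    ∀ z ∈ UHP, ∃ w ∈ UHP, Hmap μ t w = z := by
  set u : Set ℂ := {z | z ∈ UHP ∧ ∃ w ∈ UHP, Hmap μ t w = z} with hu
  have hopen : IsOpen u := by
    rw [isOpen_iff_mem_nhds]
    rintro z ⟨hz, w, hw, rfl⟩
    have han : AnalyticAt ℂ (Hmap μ t) w :=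
      (differentiableOn_Hmap μ t).analyticAt (isOpen_UHP.mem_nhds hw)
    rcases han.eventually_constant_or_nhds_le_map_nhds with hc | hn
    · exfalso
      have hne : ∀ᶠ v in 𝓝[≠] w, Hmap μ t v = Hmap μ t w ∧ v ∈ UHP ∧ v ≠ w := by
        filter_upwards [hc.filter_mono nhdsWithin_le_nhds,
          mem_nhdsWithin_of_mem_nhds (isOpen_UHP.mem_nhds hw), self_mem_nhdsWithin] with v h1 h2 h3
        exact ⟨h1, h2, h3⟩
      obtain ⟨v, h1, h2, h3⟩ := hne.exists
      have := Hmap_lower μ ht h2 hw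
      rw [h1] at this
      have h4 : 0 < ‖v - w‖ := norm_pos_iff.2 (sub_ne_zero.2 h3)
      have h5 : 0 < (Hmap μ t w).im / w.im := div_pos hz hw
      have h6 : 0 < (Hmap μ t w).im / v.im := div_pos hz h2
      simp only [sub_self, norm_zero, mul_zero] at this
      have := mul_pos h4 (add_pos h6 h5)
      linarith
    · have h1 : Hmap μ t '' UHP ∈ 𝓝 (Hmap μ t w) :=
        hn (image_mem_map (isOpen_UHP.mem_nhds hw))
      filter_upwards [h1, isOpen_UHP.mem_nhds hz] with v h2 h3
      exact ⟨h3, h2⟩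
  have hsub : UHP ⊆ u := by
    refine convex_UHP.isPreconnected.subset_of_closure_inter_subset hopen ?_ ?_
    · obtain ⟨y, h1, h2⟩ := ((eventually_im_Hmap_I μ t).and (eventually_gt_atTop 0)).exists
      have h3 : Hmap μ t (y * I) ∈ UHP := by
        have h4 : 0 < (Hmap μ t (y * I)).im := by linarith
        exact h4
      exact ⟨_, h3, h3, _, mul_I_mem h2, rfl⟩
    · rintro z ⟨hzc, hz⟩
      obtain ⟨x, hx, hlim⟩ := mem_closure_iff_seq_limit.1 hzc
      choose hxU w hwU hw using hx
      have hb : ∃ C, ∀ n, ‖x n - x 0‖ ≤ C := by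
        obtain ⟨C, hC⟩ := (hlim.sub_const (x 0)).norm.bddAbove_range
        exact ⟨C, fun n => hC ⟨n, rfl⟩⟩
      obtain ⟨C, hC⟩ := hb
      have hwb : ∀ n, w n ∈ Metric.closedBall (w 0) (2 * C / ((x 0).im / (w 0).im)) := by
        intro n
        have h1 := Hmap_lower μ ht (hwU n) (hwU 0)
        rw [hw, hw] at h1
        have h2 : 0 < (x 0).im / (w 0).im := div_pos (hxU 0) (hwU 0)
        have h3 : 0 < (x n).im / (w n).im := div_pos (hxU n) (hwU n)
        rw [mem_closedBall_iff_norm, le_div_iff₀ h2]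
        have := hC n
        nlinarith [norm_nonneg (w n - w 0)]
      obtain ⟨a, -, φ, hφ, ha⟩ := tendsto_subseq_of_bounded Metric.isBounded_closedBall hwb
      have hx2 := hlim.comp hφ.tendsto_atTop
      have haU : a ∈ UHP := by
        have h1 : z.im ≤ a.im := by
          refine le_of_tendsto_of_tendsto' ((Complex.continuous_im.tendsto _).comp hx2)
            ((Complex.continuous_im.tendsto _).comp ha) fun n => ?_
          have := im_Hmap_le μ ht (hwU (φ n))
          rw [hw] at this
          exact this
        exact lt_of_lt_of_le hz h1
      refine ⟨hz, a, haU, ?_⟩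
      have hca : ContinuousAt (Hmap μ t) a :=
        (differentiableOn_Hmap μ t).continuousOn.continuousAt (isOpen_UHP.mem_nhds haU)
      refine tendsto_nhds_unique (hca.tendsto.comp ha) ?_
      refine hx2.congr fun n => ?_
      exact (hw _).symm
  intro z hz
  exact (hsub hz).2

lemma deriv_Hmap_ne (μ : Measure ℝ) [IsProbabilityMeasure μ] {t : ℝ} (ht : 1 ≤ t) {w : ℂ}
    (hw : w ∈ UHP) (hH : Hmap μ t w ∈ UHP) : deriv (Hmap μ t) w ≠ 0 := by
  intro h0
  have hd : HasDerivAt (Hmap μ t) 0 w := by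
    rw [← h0]
    exact ((differentiableOn_Hmap μ t).differentiableAt (isOpen_UHP.mem_nhds hw)).hasDerivAt
  set c := (Hmap μ t w).im / w.im with hc
  have hcpos : 0 < c := div_pos hH hw
  have ho := (hasDerivAt_iff_isLittleO.1 hd).def (show 0 < c / 4 by positivity)
  have hcont : ContinuousAt (Hmap μ t) w := hd.continuousAt
  have hne : ∀ᶠ v in 𝓝[≠] w, ‖Hmap μ t v - Hmap μ t w - (v - w) • (0 : ℂ)‖ ≤ c / 4 * ‖v - w‖ ∧
      v ∈ UHP ∧ Hmap μ t v ∈ UHP ∧ v ≠ w := by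
    filter_upwards [ho.filter_mono nhdsWithin_le_nhds,
      mem_nhdsWithin_of_mem_nhds (isOpen_UHP.mem_nhds hw),
      mem_nhdsWithin_of_mem_nhds (hcont.preimage_mem_nhds (isOpen_UHP.mem_nhds hH)),
      self_mem_nhdsWithin] with v h1 h2 h3 h4
    exact ⟨h1, h2, h3, h4⟩
  obtain ⟨v, h1, h2, h3, h4⟩ := hne.exists
  have h5 := Hmap_lower μ ht h2 hw
  have h6 : 0 < (Hmap μ t v).im / v.im := div_pos h3 h2
  have h7 : 0 < ‖v - w‖ := norm_pos_iff.2 (sub_ne_zero.2 h4)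
  simp only [smul_zero, sub_zero] at h1
  nlinarith [mul_pos h7 h6, mul_pos h7 hcpos]

lemma exists_omega (μ : Measure ℝ) [IsProbabilityMeasure μ] {t : ℝ} (ht : 1 ≤ t) :
    ∃ ω : ℂ → ℂ, DifferentiableOn ℂ ω UHP ∧ MapsTo ω UHP UHP ∧
      ∀ z ∈ UHP, Hmap μ t (ω z) = z := by
  choose! ω hω1 hω2 using exists_Hmap_eq μ ht
  refine ⟨ω, fun z hz => ?_, fun z hz => hω1 z hz, hω2⟩
  have hHz : Hmap μ t (ω z) ∈ UHP := by rw [hω2 z hz]; exact hz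
  have hcont : ContinuousAt ω z := by
    have hc : 0 < z.im / (ω z).im := div_pos hz (hω1 z hz)
    rw [ContinuousAt, tendsto_iff_norm_sub_tendsto_zero]
    have hlim : Tendsto (fun v => 2 * ‖v - z‖ / (z.im / (ω z).im)) (𝓝 z) (𝓝 0) := by
      have : Continuous (fun v => 2 * ‖v - z‖ / (z.im / (ω z).im)) := by fun_prop
      simpa using this.tendsto z
    refine squeeze_zero' (Eventually.of_forall fun v => norm_nonneg _) ?_ hlim
    filter_upwards [isOpen_UHP.mem_nhds hz] with v hv
    have h1 := Hmap_lower μ ht (hω1 v hv) (hω1 z hz)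
    rw [hω2 v hv, hω2 z hz] at h1
    have h3 : 0 < v.im / (ω v).im := div_pos hv (hω1 v hv)
    rw [le_div_iff₀ hc]
    nlinarith [norm_nonneg (ω v - ω z)]
  have hd := ((differentiableOn_Hmap μ t).differentiableAt
    (isOpen_UHP.mem_nhds (hω1 z hz))).hasDerivAt
  exact (HasDerivAt.of_local_left_inverse hcont hd (deriv_Hmap_ne μ ht (hω1 z hz) hHz)
    (by filter_upwards [isOpen_UHP.mem_nhds hz] with v hv using hω2 v hv)
    ).differentiableAt.differentiableWithinAt


lemma tendsto_omega_I (μ : Measure ℝ) [IsProbabilityMeasure μ] {t : ℝ} (ht : 1 < t) {ω : ℂ → ℂ}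
    (hm : MapsTo ω UHP UHP) (hH : ∀ z ∈ UHP, Hmap μ t (ω z) = z) :
    Tendsto (fun y : ℝ => (y * I) * cauchyT μ (ω (y * I))) atTop (𝓝 1) := by
  have h1 : Tendsto (fun y : ℝ => ω (y * I) / (y * I)) atTop (𝓝 1) := by
    rw [tendsto_iff_norm_sub_tendsto_zero]
    have h2 := (tendsto_iff_norm_sub_tendsto_zero.1 (tendsto_Hmap_I μ t)).const_mul 4
    rw [mul_zero] at h2
    refine squeeze_zero' (Eventually.of_forall fun v => norm_nonneg _) ?_ h2
    filter_upwards [eventually_im_Hmap_I μ t, eventually_gt_atTop 0] with y h3 hy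
    have h5 : (y : ℂ) ≠ 0 := by exact_mod_cast hy.ne'
    have hyU := mul_I_mem hy
    have h4 := Hmap_lower μ ht.le hyU (hm hyU)
    rw [hH _ hyU] at h4
    have h6 : 0 < ((y : ℂ) * I).im / (ω (y * I)).im := div_pos hyU (hm hyU)
    have h7 : 1 / 2 ≤ (Hmap μ t (y * I)).im / ((y : ℂ) * I).im := by
      have : ((y : ℂ) * I).im = y := by simp
      rw [this, le_div_iff₀ hy]
      linarith
    have h8 : ‖(y : ℂ) * I - ω (y * I)‖ ≤ 4 * ‖Hmap μ t (y * I) - y * I‖ := by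
      nlinarith [norm_nonneg ((y : ℂ) * I - ω (y * I))]
    have h9 : ω (y * I) / (y * I) - 1 = (ω (y * I) - y * I) / (y * I) := by field_simp
    have h10 : Hmap μ t (y * I) / (y * I) - 1 = (Hmap μ t (y * I) - y * I) / (y * I) := by
      field_simp
    rw [h9, h10, norm_div, norm_div, norm_sub_rev, ← mul_div_assoc]
    gcongr
  have h2 : Tendsto (fun y : ℝ => Fmeas μ (ω (y * I)) / (y * I)) atTop (𝓝 1) := by
    have h3 := ((h1.const_mul (t : ℂ)).sub_const 1).div_const ((t : ℂ) - 1)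
    have ht0 : (t : ℂ) - 1 ≠ 0 := by
      rw [sub_ne_zero]
      exact_mod_cast ht.ne'
    rw [mul_one, div_self ht0] at h3
    refine h3.congr' ?_
    filter_upwards [eventually_gt_atTop 0] with y hy
    have h5 : (y : ℂ) ≠ 0 := by exact_mod_cast hy.ne'
    have h6 := hH _ (mul_I_mem hy)
    rw [Hmap] at h6
    field_simp
    linear_combination h6
  have h3 := h2.inv₀ one_ne_zero
  rw [inv_one] at h3
  refine h3.congr fun y => ?_
  rw [Fmeas, inv_div, div_eq_mul_inv, inv_inv]

lemma tendsto_omega_cocompact (μ : Measure ℝ) [IsProbabilityMeasure μ] {t : ℝ} (ht : 1 ≤ t)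
    {ω : ℂ → ℂ} (hm : MapsTo ω UHP UHP) (hH : ∀ z ∈ UHP, Hmap μ t (ω z) = z) {ε : ℝ}
    (hε : 0 < ε) :
    Tendsto (fun z => cauchyT μ (ω z)) (cocompact ℂ ⊓ 𝓟 {z | ε ≤ z.im}) (𝓝 0) := by
  refine (tendsto_cauchyT_cocompact μ hε).comp ?_
  have hmem : ∀ᶠ z in (cocompact ℂ ⊓ 𝓟 {z : ℂ | ε ≤ z.im}), ε ≤ z.im :=
    mem_inf_of_right (mem_principal_self _)
  rw [tendsto_inf]
  constructor
  · rw [← Metric.cobounded_eq_cocompact, ← tendsto_norm_atTop_iff_cobounded]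
    have hI : I ∈ UHP := by simp [UHP]
    have h1 : Tendsto (fun z : ℂ => (‖z‖ - 1) / (2 * t) - ‖ω I‖)
        (Bornology.cobounded ℂ ⊓ 𝓟 {z | ε ≤ z.im}) atTop := by
      refine Tendsto.mono_left ?_ inf_le_left
      refine tendsto_atTop_add_const_right _ _ ?_
      refine Tendsto.atTop_div_const (by linarith) ?_
      exact tendsto_atTop_add_const_right _ _ tendsto_norm_cobounded_atTop
    rw [Metric.cobounded_eq_cocompact] at h1 ⊢
    refine tendsto_atTop_mono' _ ?_ h1
    filter_upwards [hmem] with z hz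
    have hzU : z ∈ UHP := lt_of_lt_of_le hε hz
    have h2 := Hmap_upper μ ht (hm hzU) (hm hI) (by rw [hH _ hzU]; exact hzU)
      (by rw [hH _ hI]; exact hI)
    rw [hH _ hzU, hH _ hI] at h2
    have h3 : ‖z‖ - 1 ≤ ‖z - I‖ := by
      have := norm_sub_norm_le z I
      simpa using this
    have h4 : ‖ω z - ω I‖ ≤ ‖ω z‖ + ‖ω I‖ := norm_sub_le _ _
    rw [sub_le_iff_le_add, div_le_iff₀ (by linarith)]
    nlinarith
  · rw [tendsto_principal]
    filter_upwards [hmem] with z hz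
    have hzU : z ∈ UHP := lt_of_lt_of_le hε hz
    have := im_Hmap_le μ ht (hm hzU)
    rw [hH _ hzU] at this
    exact hz.trans this



/-- The Cayley transform from the unit disc to the upper half-plane. -/
noncomputable def cay (ζ : ℂ) : ℂ := I * (1 + ζ) / (1 - ζ)

lemma im_cay (ζ : ℂ) : (cay ζ).im = (1 - ‖ζ‖ ^ 2) / ‖1 - ζ‖ ^ 2 := by
  rw [cay, Complex.div_im, ← Complex.normSq_eq_norm_sq, ← Complex.normSq_eq_norm_sq]
  simp only [mul_im, mul_re, add_im, add_re, sub_im, sub_re, I_re, I_im, one_re, one_im,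
    Complex.normSq_apply]
  ring

lemma cay_inv {z : ℂ} (hz : z ∈ UHP) : cay ((z - I) / (z + I)) = z := by
  have h1 : z + I ≠ 0 := by
    intro h
    have : (z + I).im = 0 := by rw [h]; simp
    have h2 : 0 < z.im := hz
    simp at this
    linarith
  have h3 : 1 - (z - I) / (z + I) = 2 * I / (z + I) := by
    field_simp
    ring
  rw [cay, h3]
  field_simp
  ring

lemma add_I_ne {z : ℂ} (hz : 0 ≤ z.im) : z + I ≠ 0 := by
  intro h
  have : (z + I).im = 0 := by rw [h]; simp
  simp at this
  linarith

lemma sq_norm_cayinv {z : ℂ} (hz : z ∈ UHP) :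
    1 - ‖(z - I) / (z + I)‖ ^ 2 = 4 * z.im / ‖z + I‖ ^ 2 := by
  have h1 : ‖z + I‖ ≠ 0 := norm_ne_zero_iff.2 (add_I_ne (le_of_lt hz))
  rw [norm_div, div_pow, eq_div_iff (by positivity), sub_mul, div_mul_cancel₀ _ (by positivity),
    ← Complex.normSq_eq_norm_sq, ← Complex.normSq_eq_norm_sq]
  simp only [add_im, add_re, sub_im, sub_re, I_re, I_im, Complex.normSq_apply]
  ring

lemma cayinv_mem {z : ℂ} (hz : z ∈ UHP) : (z - I) / (z + I) ∈ Metric.ball (0 : ℂ) 1 := by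
  have h := sq_norm_cayinv hz
  have h1 : 0 < ‖z + I‖ := norm_pos_iff.2 (add_I_ne (le_of_lt hz))
  have h2 : 0 < z.im := hz
  have h3 : 0 < 4 * z.im / ‖z + I‖ ^ 2 := by positivity
  rw [mem_ball_zero_iff]
  nlinarith [norm_nonneg ((z - I) / (z + I))]

lemma poisson_cay {z ζ : ℂ} (hz : z ∈ UHP) (hζ : ‖ζ‖ = 1) (h1 : ζ ≠ 1) :
    poissonKernel 0 ((z - I) / (z + I)) ζ =
      (1 + (cay ζ).re ^ 2) * (z.im * ‖(z - ((cay ζ).re : ℂ))⁻¹‖ ^ 2) := by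
  have him : (cay ζ).im = 0 := by rw [im_cay, hζ]; simp
  set x : ℝ := (cay ζ).re with hx
  have hcx : cay ζ = (x : ℂ) := by
    apply Complex.ext <;> simp [hx, him]
  have hs : 1 - ζ ≠ 0 := sub_ne_zero.2 (Ne.symm h1)
  have hxI : (x : ℂ) + I ≠ 0 := add_I_ne (by simp)
  have hzI : z + I ≠ 0 := add_I_ne (le_of_lt hz)
  have hzx := sub_ofReal_ne hz x
  have hζx : ζ = ((x : ℂ) - I) / (x + I) := by
    rw [eq_div_iff hxI, ← hcx, cay]
    field_simp
    ring
  have hdiff : ζ - (z - I) / (z + I) = - (2 * I * (z - x)) / ((x + I) * (z + I)) := by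
    rw [hζx]
    field_simp
    ring
  have hn : ‖(x : ℂ) + I‖ ^ 2 = 1 + x ^ 2 := by
    rw [← Complex.normSq_eq_norm_sq]
    simp [Complex.normSq_apply]
    ring
  rw [poissonKernel_def, sub_zero, sub_zero, hζ, one_pow, sq_norm_cayinv hz, hdiff, norm_div,
    norm_neg, norm_mul, norm_mul, norm_mul, ← hn, norm_inv, Complex.norm_I, Complex.norm_two]
  have e1 : ‖z + I‖ ≠ 0 := norm_ne_zero_iff.2 hzI
  have e2 : ‖(x : ℂ) + I‖ ≠ 0 := norm_ne_zero_iff.2 hxI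
  have e3 : ‖z - (x : ℂ)‖ ≠ 0 := norm_ne_zero_iff.2 hzx
  field_simp
  norm_num
  ring

open Classical in
/-- The function `G(· + iε)` transported to the disc. -/
noncomputable def discF (G : ℂ → ℂ) (ε : ℝ) (ζ : ℂ) : ℂ :=
  if ζ = 1 then 0 else G (cay ζ + ε * I)

lemma im_cay_nonneg {ζ : ℂ} (hζ : ‖ζ‖ ≤ 1) : 0 ≤ (cay ζ).im := by
  rw [im_cay]
  apply div_nonneg _ (by positivity)
  nlinarith [norm_nonneg ζ]

lemma tendsto_cay_one : Tendsto cay (𝓝[≠] 1) (cocompact ℂ) := by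
  rw [← Metric.cobounded_eq_cocompact]
  have h1 : Tendsto (fun ζ : ℂ => (1 - ζ)) (𝓝[≠] 1) (𝓝[≠] 0) := by
    rw [tendsto_nhdsWithin_iff]
    constructor
    · have : Continuous (fun ζ : ℂ => (1 - ζ)) := by fun_prop
      have h := this.tendsto 1
      rw [sub_self] at h
      exact h.mono_left nhdsWithin_le_nhds
    · filter_upwards [self_mem_nhdsWithin] with ζ h
      exact sub_ne_zero.2 (Ne.symm h)
  have h2 : Tendsto (fun ζ : ℂ => (1 - ζ)⁻¹) (𝓝[≠] 1) (Bornology.cobounded ℂ) :=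
    tendsto_inv₀_nhdsNE_zero.comp h1
  have h3 : Tendsto (fun ζ : ℂ => 2 * I * (1 - ζ)⁻¹) (𝓝[≠] 1) (Bornology.cobounded ℂ) :=
    (tendsto_mul_left_cobounded (by simp)).comp h2
  have h4 : Tendsto (fun ζ : ℂ => 2 * I * (1 - ζ)⁻¹ - I) (𝓝[≠] 1) (Bornology.cobounded ℂ) :=
    (tendsto_sub_const_cobounded I).comp h3
  refine h4.congr' ?_
  filter_upwards [self_mem_nhdsWithin] with ζ h
  have hs : 1 - ζ ≠ 0 := sub_ne_zero.2 (Ne.symm h)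
  rw [cay]
  field_simp
  ring

lemma differentiableAt_discF {G : ℂ → ℂ} (hd : DifferentiableOn ℂ G UHP) {ε : ℝ} (hε : 0 < ε)
    {ζ : ℂ} (hζ : ‖ζ‖ ≤ 1) (h1 : ζ ≠ 1) : DifferentiableAt ℂ (discF G ε) ζ := by
  have hs : 1 - ζ ≠ 0 := sub_ne_zero.2 (Ne.symm h1)
  have hmem : cay ζ + ε * I ∈ UHP := by
    have := im_cay_nonneg hζ
    have h2 : (0 : ℝ) < (cay ζ + ε * I).im := by
      simp
      linarith
    exact h2
  have hc : DifferentiableAt ℂ (fun ζ => cay ζ + ε * I) ζ := by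
    unfold cay
    fun_prop (disch := assumption)
  have h2 : DifferentiableAt ℂ (fun ζ => G (cay ζ + ε * I)) ζ :=
    (hd.differentiableAt (isOpen_UHP.mem_nhds hmem)).comp (f := fun ζ => cay ζ + ε * I) ζ hc
  refine h2.congr_of_eventuallyEq ?_
  filter_upwards [isOpen_ne.mem_nhds h1] with v hv
  rw [discF, if_neg hv]

lemma diffContOnCl_discF {G : ℂ → ℂ} (hd : DifferentiableOn ℂ G UHP)
    (h0 : ∀ ε > 0, Tendsto G (cocompact ℂ ⊓ 𝓟 {z | ε ≤ z.im}) (𝓝 0)) {ε : ℝ} (hε : 0 < ε) :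
    DiffContOnCl ℂ (discF G ε) (Metric.ball 0 1) := by
  constructor
  · intro ζ hζ
    rw [mem_ball_zero_iff] at hζ
    refine (differentiableAt_discF hd hε hζ.le ?_).differentiableWithinAt
    rintro rfl
    simp at hζ
  · rw [closure_ball _ one_ne_zero]
    intro ζ hζ
    rw [mem_closedBall_zero_iff] at hζ
    by_cases h1 : ζ = 1
    · subst h1
      rw [← continuousWithinAt_sdiff_self]
      have hdef : discF G ε 1 = 0 := by simp [discF]
      rw [ContinuousWithinAt, hdef]
      have hmem : ∀ᶠ v in 𝓝[Metric.closedBall (0 : ℂ) 1 \ {1}] 1, ‖v‖ ≤ 1 ∧ v ≠ 1 := by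
        filter_upwards [self_mem_nhdsWithin] with v hv
        exact ⟨by simpa using hv.1, hv.2⟩
      have hcay : Tendsto (fun v => cay v + ε * I) (𝓝[Metric.closedBall (0 : ℂ) 1 \ {1}] 1)
          (cocompact ℂ ⊓ 𝓟 {z | ε ≤ z.im}) := by
        rw [tendsto_inf]
        constructor
        · rw [← Metric.cobounded_eq_cocompact]
          refine (tendsto_add_const_cobounded _).comp ?_
          rw [Metric.cobounded_eq_cocompact]
          exact tendsto_cay_one.mono_left (nhdsWithin_mono _ (fun v hv => hv.2))
        · rw [tendsto_principal]
          filter_upwards [hmem] with v hv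
          have := im_cay_nonneg hv.1
          simpa using this
      refine ((h0 ε hε).comp hcay).congr' ?_
      filter_upwards [hmem] with v hv
      rw [discF, if_neg hv.2]
      rfl
    · exact (differentiableAt_discF hd hε hζ h1).continuousAt.continuousWithinAt

lemma exists_measure_eps {G : ℂ → ℂ} (hd : DifferentiableOn ℂ G UHP)
    (him : ∀ z ∈ UHP, (G z).im ≤ 0)
    (h0 : ∀ ε > 0, Tendsto G (cocompact ℂ ⊓ 𝓟 {z | ε ≤ z.im}) (𝓝 0)) {ε : ℝ} (hε : 0 < ε) :
    ∃ ν : Measure ℝ, ∀ z ∈ UHP,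
      ∫⁻ x : ℝ, ENNReal.ofReal (z.im * ‖(z - (x : ℂ))⁻¹‖ ^ 2) ∂ν =
        ENNReal.ofReal (-(G (z + ε * I)).im) := by
  have hD := diffContOnCl_discF hd h0 hε
  set c : ℝ → ℂ := circleMap 0 1 with hc
  have hcn : ∀ θ, ‖c θ‖ = 1 := fun θ => by simp [hc]
  have hcc : Continuous c := continuous_circleMap 0 1
  set f := discF G ε with hf
  have hfc : Continuous fun θ => f (c θ) := by
    have h1 := hD.continuousOn
    rw [closure_ball _ one_ne_zero] at h1
    exact h1.comp_continuous hcc fun θ => by simp [hcn]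
  set v : ℝ → ℝ := fun θ => -(f (c θ)).im with hv
  have hvc : Continuous v := (Complex.continuous_im.comp hfc).neg
  have hv0 : ∀ θ, 0 ≤ v θ := by
    intro θ
    simp only [hv, hf, discF]
    split_ifs with h
    · simp
    · have h1 := im_cay_nonneg (hcn θ).le
      have h2 : (0 : ℝ) < (cay (c θ) + ε * I).im := by
        simp
        linarith
      have := him _ h2
      linarith
  set X : ℝ → ℝ := fun θ => (cay (c θ)).re with hX
  have hXm : Measurable X := by
    have : Measurable cay := by
      unfold cay
      fun_prop
    exact Complex.measurable_re.comp (this.comp hcc.measurable)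
  set ρ := volume.restrict (Ioc 0 (2 * Real.pi)) with hρ
  set D : ℝ → ENNReal := fun θ => ENNReal.ofReal ((2 * Real.pi)⁻¹ * v θ * (1 + X θ ^ 2)) with hDd
  have hDm : Measurable D := by
    have := hvc.measurable
    fun_prop
  refine ⟨(ρ.withDensity D).map X, fun z hz => ?_⟩
  have hKm : Measurable fun x : ℝ => ENNReal.ofReal (z.im * ‖(z - (x : ℂ))⁻¹‖ ^ 2) := by
    have := (continuous_inv_sub hz).measurable
    fun_prop
  rw [lintegral_map hKm hXm,
    lintegral_withDensity_eq_lintegral_mul _ hDm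
      (g := fun θ => ENNReal.ofReal (z.im * ‖(z - (X θ : ℂ))⁻¹‖ ^ 2)) (hKm.comp hXm)]
  set w := (z - I) / (z + I) with hw
  have hwm := cayinv_mem hz
  rw [← hw] at hwm
  have hPc : Continuous fun θ => poissonKernel 0 w (c θ) := by
    unfold poissonKernel
    refine Continuous.div (by fun_prop) (by fun_prop) fun θ => ?_
    have : c θ - 0 - (w - 0) ≠ 0 := by
      intro h
      rw [sub_zero, sub_zero, sub_eq_zero] at h
      rw [← h, mem_ball_zero_iff, hcn] at hwm
      exact lt_irrefl _ hwm
    positivity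
  have hP0 : ∀ θ, 0 ≤ poissonKernel 0 w (c θ) := by
    intro θ
    unfold poissonKernel
    apply div_nonneg _ (by positivity)
    rw [sub_zero, sub_zero, hcn]
    rw [mem_ball_zero_iff] at hwm
    nlinarith [norm_nonneg w]
  have hpo : -(f w).im = ∫ θ, (2 * Real.pi)⁻¹ * (poissonKernel 0 w (c θ) * v θ) ∂ρ := by
    have h1 := hD.circleAverage_poissonKernel_smul hwm
    rw [Real.circleAverage, intervalIntegral.integral_of_le (by positivity)] at h1
    have hint : Integrable (fun θ => (poissonKernel 0 w • f) (circleMap 0 1 θ)) ρ := by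
      have hcont : Continuous (fun θ => (poissonKernel 0 w • f) (circleMap 0 1 θ)) :=
        hPc.smul hfc
      exact (hcont.integrableOn_Icc (a := 0) (b := 2 * Real.pi)).mono_set Ioc_subset_Icc_self
    have h2 := Complex.imCLM.integral_comp_comm hint
    rw [← h1]
    simp only [Complex.imCLM_apply] at h2
    rw [Complex.smul_im, ← h2, smul_eq_mul, ← mul_neg, ← integral_neg, ← integral_const_mul]
    congr 1
    ext θ
    simp [hv, hf, hc]
  have hfw : f w = G (z + ε * I) := by
    have hne : w ≠ 1 := by
      intro h
      rw [h] at hwm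
      simp at hwm
    rw [hf, discF, if_neg hne, hw, cay_inv hz]
  rw [← hfw, hpo, ofReal_integral_eq_lintegral_ofReal]
  · refine lintegral_congr_ae ?_
    have hne : ∀ᵐ θ ∂ρ, c θ ≠ 1 ∨ f (c θ) = 0 := by
      refine ae_of_all _ fun θ => ?_
      by_cases h : c θ = 1
      · right
        rw [h, hf, discF, if_pos rfl]
      · exact Or.inl h
    filter_upwards [hne] with θ hθ
    simp only [Pi.mul_apply, Function.comp_apply, hDd]
    rw [← ENNReal.ofReal_mul (by have := hv0 θ; positivity)]
    rcases hθ with hθ | hθ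
    · rw [hw, poisson_cay hz (hcn θ) hθ]
      congr 1
      simp only [hX]
      ring
    · have : v θ = 0 := by simp [hv, hθ]
      rw [this]
      simp
  · have hcont : Continuous fun θ => (2 * Real.pi)⁻¹ * (poissonKernel 0 w (c θ) * v θ) := by
      fun_prop
    exact (hcont.integrableOn_Icc (a := 0) (b := 2 * Real.pi)).mono_set Ioc_subset_Icc_self
  · refine ae_of_all _ fun θ => ?_
    have := hv0 θ
    have := hP0 θ
    dsimp
    positivity



lemma tendsto_im_I {G : ℂ → ℂ}
    (hI : Tendsto (fun y : ℝ => (y * I) * G (y * I)) atTop (𝓝 1)) :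
    Tendsto (fun s : ℝ => s * (-(G (s * I)).im)) atTop (𝓝 1) := by
  have h : Tendsto (fun y : ℝ => ((y * I) * G (y * I)).re) atTop (𝓝 (1 : ℂ).re) :=
    (Complex.continuous_re.tendsto _).comp hI
  rw [one_re] at h
  refine h.congr fun y => ?_
  simp

lemma kernel_I {y : ℝ} (hy : 0 < y) (x : ℝ) :
    y * (((y : ℂ) * I).im * ‖((y : ℂ) * I - (x : ℂ))⁻¹‖ ^ 2) = y ^ 2 / (x ^ 2 + y ^ 2) := by
  rw [norm_inv, inv_pow, ← Complex.normSq_eq_norm_sq]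
  simp [Complex.normSq_apply]
  field_simp

lemma tendsto_im_I_eps {G : ℂ → ℂ}
    (hI : Tendsto (fun y : ℝ => (y * I) * G (y * I)) atTop (𝓝 1)) (ε : ℝ) :
    Tendsto (fun y : ℝ => y * (-(G (y * I + ε * I)).im)) atTop (𝓝 1) := by
  have h1 : Tendsto (fun y : ℝ => y + ε) atTop atTop := tendsto_atTop_add_const_right _ _ tendsto_id
  have h2 := (tendsto_im_I hI).comp h1
  have h3 : Tendsto (fun y : ℝ => 1 - ε / (y + ε)) atTop (𝓝 (1 - 0)) :=
    tendsto_const_nhds.sub (tendsto_const_nhds.div_atTop h1)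
  have h4 := h3.mul h2
  rw [sub_zero, one_mul] at h4
  refine h4.congr' ?_
  filter_upwards [eventually_gt_atTop (-ε)] with y hy
  have h5 : y + ε ≠ 0 := by linarith
  have h6 : ((y + ε : ℝ) : ℂ) * I = y * I + ε * I := by push_cast; ring
  simp only [Function.comp_apply]
  rw [h6]
  field_simp
  ring

lemma mass_eq_one {G : ℂ → ℂ}
    (hI : Tendsto (fun y : ℝ => (y * I) * G (y * I)) atTop (𝓝 1)) {ε : ℝ} {ν : Measure ℝ}
    (hν : ∀ z ∈ UHP, ∫⁻ x : ℝ, ENNReal.ofReal (z.im * ‖(z - (x : ℂ))⁻¹‖ ^ 2) ∂ν =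
        ENNReal.ofReal (-(G (z + ε * I)).im)) : IsProbabilityMeasure ν := by
  have key : ∀ y : ℝ, 0 < y → ∫⁻ x : ℝ, ENNReal.ofReal (y ^ 2 / (x ^ 2 + y ^ 2)) ∂ν =
      ENNReal.ofReal (y * (-(G (y * I + ε * I)).im)) := by
    intro y hy
    rw [ENNReal.ofReal_mul hy.le, ← hν _ (mul_I_mem hy), ← lintegral_const_mul']
    · congr 1
      ext x
      rw [← ENNReal.ofReal_mul hy.le, kernel_I hy x]
    · exact ENNReal.ofReal_ne_top
  have hlim : Tendsto (fun n : ℕ => ∫⁻ x : ℝ,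
      ENNReal.ofReal (((n : ℝ) + 1) ^ 2 / (x ^ 2 + ((n : ℝ) + 1) ^ 2)) ∂ν) atTop (𝓝 1) := by
    have hn : Tendsto (fun n : ℕ => (n : ℝ) + 1) atTop atTop :=
      tendsto_atTop_add_const_right _ _ tendsto_natCast_atTop_atTop
    have h1 := ENNReal.tendsto_ofReal ((tendsto_im_I_eps hI ε).comp hn)
    rw [ENNReal.ofReal_one] at h1
    refine h1.congr fun n => ?_
    exact (key _ (by positivity)).symm
  constructor
  apply le_antisymm
  · have hF := lintegral_liminf_le (u := (atTop : Filter ℕ)) (μ := ν) (f := fun (n : ℕ) (x : ℝ) =>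
      ENNReal.ofReal (((n : ℝ) + 1) ^ 2 / (x ^ 2 + ((n : ℝ) + 1) ^ 2))) (fun n => by fun_prop)
    rw [hlim.liminf_eq] at hF
    refine le_trans (le_of_eq ?_) hF
    rw [← lintegral_one]
    congr 1
    ext x
    symm
    refine Tendsto.liminf_eq ?_
    rw [← ENNReal.ofReal_one]
    refine ENNReal.tendsto_ofReal ?_
    have hn : Tendsto (fun n : ℕ => x ^ 2 + ((n : ℝ) + 1) ^ 2) atTop atTop := by
      refine tendsto_atTop_add_const_left _ _ ?_
      exact (tendsto_pow_atTop two_ne_zero).comp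
        (tendsto_atTop_add_const_right _ _ tendsto_natCast_atTop_atTop)
    have h2 : Tendsto (fun n : ℕ => 1 - x ^ 2 / (x ^ 2 + ((n : ℝ) + 1) ^ 2)) atTop (𝓝 (1 - 0)) :=
      tendsto_const_nhds.sub (tendsto_const_nhds.div_atTop hn)
    rw [sub_zero] at h2
    refine h2.congr fun n => ?_
    have : x ^ 2 + ((n : ℝ) + 1) ^ 2 ≠ 0 := by positivity
    field_simp
    ring
  · refine le_of_tendsto' hlim fun n => ?_
    calc _ ≤ ∫⁻ x : ℝ, 1 ∂ν := by
          refine lintegral_mono fun x => ?_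
          rw [ENNReal.ofReal_le_one, div_le_one (by positivity)]
          nlinarith [sq_nonneg x]
      _ = ν univ := by simp

lemma im_mul_Jint {G : ℂ → ℂ} (him : ∀ z ∈ UHP, (G z).im ≤ 0) {ε : ℝ} (hε : 0 < ε)
    {ν : Measure ℝ} [IsProbabilityMeasure ν]
    (hν : ∀ z ∈ UHP, ∫⁻ x : ℝ, ENNReal.ofReal (z.im * ‖(z - (x : ℂ))⁻¹‖ ^ 2) ∂ν =
        ENNReal.ofReal (-(G (z + ε * I)).im)) {z : ℂ} (hz : z ∈ UHP) :
    z.im * Jint ν z = -(G (z + ε * I)).im := by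
  have h0 : 0 < z.im := hz
  have hzε : z + ε * I ∈ UHP := by
    have : (0 : ℝ) < (z + ε * I).im := by
      simp
      linarith
    exact this
  have h1 := hν z hz
  rw [← ofReal_integral_eq_lintegral_ofReal ((integrable_sq_inv_sub ν hz).const_mul _)
    (ae_of_all _ fun x => by dsimp; positivity), integral_const_mul] at h1
  rw [ENNReal.ofReal_eq_ofReal_iff] at h1
  · exact h1
  · exact mul_nonneg h0.le (integral_nonneg fun x => by positivity)
  · linarith [him _ hzε]

lemma tail_le {ν : Measure ℝ} [IsProbabilityMeasure ν] {r : ℝ} (hr : 0 < r) :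
    ν (Metric.closedBall 0 r)ᶜ ≤
      ENNReal.ofReal (2 * (1 - r * (((r : ℂ) * I).im * Jint ν (r * I)))) := by
  have hint := (integrable_sq_inv_sub ν (mul_I_mem hr)).const_mul ((r : ℂ) * I).im
  have hint2 := hint.const_mul r
  have h1 : 2 * (1 - r * (((r : ℂ) * I).im * Jint ν (r * I))) =
      ∫ x : ℝ, 2 * (1 - r * (((r : ℂ) * I).im * ‖((r : ℂ) * I - (x : ℂ))⁻¹‖ ^ 2)) ∂ν := by
    rw [integral_const_mul, integral_sub (integrable_const _) hint2, integral_const_mul,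
      integral_const_mul]
    simp [Jint]
  have hnn : ∀ x : ℝ, 0 ≤ 2 * (1 - r * (((r : ℂ) * I).im * ‖((r : ℂ) * I - (x : ℂ))⁻¹‖ ^ 2)) := by
    intro x
    rw [kernel_I hr]
    have : r ^ 2 / (x ^ 2 + r ^ 2) ≤ 1 := by
      rw [div_le_one (by positivity)]
      nlinarith [sq_nonneg x]
    linarith
  have hint3 : Integrable (fun x : ℝ =>
      2 * (1 - r * (((r : ℂ) * I).im * ‖((r : ℂ) * I - (x : ℂ))⁻¹‖ ^ 2))) ν :=
    ((integrable_const 1).sub hint2).const_mul 2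
  rw [h1, ofReal_integral_eq_lintegral_ofReal hint3
    (ae_of_all _ hnn), ← lintegral_indicator_one Metric.isClosed_closedBall.measurableSet.compl]
  refine lintegral_mono fun x => ?_
  by_cases hx : x ∈ (Metric.closedBall (0 : ℝ) r)ᶜ
  · rw [indicator_of_mem hx, Pi.one_apply, ← ENNReal.ofReal_one]
    apply ENNReal.ofReal_le_ofReal
    rw [kernel_I hr]
    have hx2 : r < |x| := by simpa using hx
    have : r ^ 2 / (x ^ 2 + r ^ 2) ≤ 1 / 2 := by
      rw [div_le_div_iff₀ (by positivity) (by norm_num)]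
      nlinarith [sq_abs x]
    linarith
  · rw [indicator_of_notMem hx]
    exact zero_le

lemma exists_radius {G : ℂ → ℂ} (hI : Tendsto (fun y : ℝ => (y * I) * G (y * I)) atTop (𝓝 1))
    {δ : ℝ} (hδ : 0 < δ) :
    ∃ r : ℝ, 0 < r ∧ ∀ ε : ℝ, 0 < ε → ε ≤ 1 → 1 - δ ≤ r * (-(G (r * I + ε * I)).im) := by
  set η := min (δ / 2) 1 with hη
  have hη0 : 0 < η := by positivity
  have hη1 : η ≤ 1 := min_le_right _ _
  have hη2 : η ≤ δ / 2 := min_le_left _ _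
  have h1 := (tendsto_im_I hI).eventually (lt_mem_nhds (show 1 - η < 1 by linarith))
  obtain ⟨R, hR⟩ := eventually_atTop.1 h1
  refine ⟨max (max R 1) (1 / η), by positivity, fun ε hε hε1 => ?_⟩
  set r := max (max R 1) (1 / η) with hr
  have hr1 : 1 ≤ r := (le_max_right R 1).trans (le_max_left _ _)
  have hrR : R ≤ r := (le_max_left R 1).trans (le_max_left _ _)
  have hrη : 1 / η ≤ r := le_max_right _ _
  rw [div_le_iff₀ hη0] at hrη
  have h2 := hR (r + ε) (by linarith)
  have h6 : ((r + ε : ℝ) : ℂ) * I = r * I + ε * I := by push_cast; ring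
  rw [h6] at h2
  set m := -(G (r * I + ε * I)).im
  have hm : 0 ≤ m := by
    by_contra hneg
    nlinarith
  -- (r + ε) m > 1 - η, and ε ≤ 1 ≤ η r
  have h7 : ε * m ≤ η * (r * m) := by nlinarith
  nlinarith [mul_nonneg (by linarith : 0 ≤ r) hm]

theorem exists_cauchyT_eq (G : ℂ → ℂ) (hd : DifferentiableOn ℂ G UHP)
    (him : ∀ z ∈ UHP, (G z).im ≤ 0)
    (hI : Tendsto (fun y : ℝ => (y * I) * G (y * I)) atTop (𝓝 1))
    (h0 : ∀ ε > 0, Tendsto G (cocompact ℂ ⊓ 𝓟 {z | ε ≤ z.im}) (𝓝 0)) :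
    ∃ ν : Measure ℝ, IsProbabilityMeasure ν ∧ ∀ z ∈ UHP, cauchyT ν z = G z := by
  set e : ℕ → ℝ := fun n => 1 / ((n : ℝ) + 1) with he
  have he0 : ∀ n, 0 < e n := fun n => by positivity
  have he1 : ∀ n, e n ≤ 1 := fun n => by
    rw [he]
    dsimp
    rw [div_le_one (by positivity)]
    have : (0 : ℝ) ≤ n := by positivity
    linarith
  have helim : Tendsto e atTop (𝓝 0) := tendsto_one_div_add_atTop_nhds_zero_nat
  choose ν hν using fun n => exists_measure_eps hd him h0 (he0 n)
  have hp : ∀ n, IsProbabilityMeasure (ν n) := fun n => mass_eq_one hI (hν n)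
  have hJ : ∀ n, ∀ z ∈ UHP, z.im * Jint (ν n) z = -(G (z + e n * I)).im :=
    fun n z hz => im_mul_Jint him (he0 n) (hν n) hz
  set P : ℕ → ProbabilityMeasure ℝ := fun n => ⟨ν n, hp n⟩ with hP
  have htight : IsTightMeasureSet
      {((m : ProbabilityMeasure ℝ) : Measure ℝ) | m ∈ Set.range P} := by
    rw [isTightMeasureSet_iff_exists_isCompact_measure_compl_le]
    intro δ hδ
    by_cases htop : δ = ⊤
    · exact ⟨∅, isCompact_empty, fun _ _ => by simp [htop]⟩
    have hδ' : 0 < δ.toReal := ENNReal.toReal_pos hδ.ne' htop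
    obtain ⟨r, hr, hr2⟩ := exists_radius hI (show 0 < δ.toReal / 2 by positivity)
    refine ⟨Metric.closedBall 0 r, isCompact_closedBall _ _, ?_⟩
    rintro _ ⟨_, ⟨n, rfl⟩, rfl⟩
    have := hp n
    refine (tail_le (ν := ν n) hr).trans ?_
    rw [hJ n _ (mul_I_mem hr)]
    refine ENNReal.ofReal_le_of_le_toReal ?_
    have := hr2 (e n) (he0 n) (he1 n)
    linarith
  have hcomp := isCompact_closure_of_isTightMeasureSet htight
  obtain ⟨Q, -, hQ⟩ := hcomp.ultrafilter_le_nhds ((hyperfilter ℕ : Ultrafilter ℕ).map P) (by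
    rw [le_principal_iff]
    exact Filter.mem_map.2 (Filter.univ_mem' fun n => subset_closure ⟨n, rfl⟩))
  have hQ' : Tendsto P (hyperfilter ℕ : Filter ℕ) (𝓝 Q) := hQ
  have hU : (hyperfilter ℕ : Filter ℕ) ≤ atTop := by
    rw [← Nat.cofinite_eq_atTop]
    exact hyperfilter_le_cofinite
  refine ⟨Q, inferInstance, ?_⟩
  have him2 : ∀ z ∈ UHP, (cauchyT Q z).im = (G z).im := by
    intro z hz
    rw [im_cauchyT _ hz]
    have hb : ∀ x : ℝ, ‖‖(z - (x : ℂ))⁻¹‖ ^ 2‖ ≤ z.im⁻¹ ^ 2 := fun x => by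
      rw [Real.norm_of_nonneg (by positivity)]
      have := norm_inv_sub_le hz x
      gcongr
    let g : BoundedContinuousFunction ℝ ℝ := BoundedContinuousFunction.ofNormedAddCommGroup
      (fun x : ℝ => ‖(z - (x : ℂ))⁻¹‖ ^ 2) ((continuous_inv_sub hz).norm.pow 2) _ hb
    have h1 := (ProbabilityMeasure.tendsto_iff_forall_integral_tendsto.1 hQ') g
    have h2 : Tendsto (fun n => Jint (ν n) z) (hyperfilter ℕ : Filter ℕ) (𝓝 (Jint Q z)) := h1
    have h3 := h2.const_mul z.im
    have h4 : Tendsto (fun n => -(G (z + e n * I)).im) (hyperfilter ℕ : Filter ℕ)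
        (𝓝 (-(G z).im)) := by
      refine Tendsto.mono_left ?_ hU
      have hc : ContinuousAt G z := (hd.differentiableAt (isOpen_UHP.mem_nhds hz)).continuousAt
      have h5 : Tendsto (fun n => z + e n * I) atTop (𝓝 z) := by
        have h6 : Tendsto (fun n => ((e n : ℝ) : ℂ)) atTop (𝓝 ((0 : ℝ) : ℂ)) :=
          (Complex.continuous_ofReal.tendsto _).comp helim
        have h7 := (h6.mul_const I).const_add z
        simpa using h7
      exact ((Complex.continuous_im.tendsto _).comp (hc.tendsto.comp h5)).neg
    have h5 := tendsto_nhds_unique (h3.congr fun n => hJ n z hz) h4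
    linarith
  have han : AnalyticOnNhd ℂ (fun z => cauchyT Q z - G z) UHP :=
    ((differentiableOn_cauchyT (Q : Measure ℝ)).sub hd).analyticOnNhd isOpen_UHP
  obtain ⟨k, hk⟩ := han.eq_const_of_im_eq_const (c₀ := 0)
    (fun z hz => by rw [sub_im, him2 z hz, sub_self]) isOpen_UHP
    (convex_UHP.isConnected ⟨I, by simp [UHP]⟩)
  have hcI : Tendsto (fun y : ℝ => (y : ℂ) * I) atTop (cocompact ℂ ⊓ 𝓟 {z | 1 ≤ z.im}) := by
    rw [tendsto_inf]
    constructor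
    · rw [← Metric.cobounded_eq_cocompact, ← tendsto_norm_atTop_iff_cobounded]
      refine tendsto_atTop_mono (fun y => ?_) tendsto_id
      simpa using le_abs_self y
    · rw [tendsto_principal]
      filter_upwards [eventually_ge_atTop 1] with y hy
      simpa using hy
  have hlim := ((tendsto_cauchyT_cocompact (Q : Measure ℝ) one_pos).comp hcI).sub
    ((h0 1 one_pos).comp hcI)
  have hk0 : k = 0 := by
    rw [sub_zero] at hlim
    refine tendsto_nhds_unique (tendsto_const_nhds.congr' ?_) hlim
    filter_upwards [eventually_gt_atTop 0] with y hy
    exact (hk _ (mul_I_mem hy)).symm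
  intro z hz
  have := hk z hz
  rw [hk0] at this
  exact sub_eq_zero.1 this


/-- Existence of the free convolution power `μ^{⊞ t}` for `t ≥ 1`: there are a
probability measure `μ_t` on `ℝ` and an injective analytic `ω_t : ℂ⁺ → ℂ⁺` with
`F_{μ_t} = F_μ ∘ ω_t`, `ω_t(z) = z/t + (1 − 1/t)·F_{μ_t}(z)`, and
`H_t(ω_t(z)) = z` where `H_t(z) = t·z + (1 − t)·F_μ(z)`. -/
theorem free_convolution_power_exists
    (μ : Measure ℝ) [IsProbabilityMeasure μ] (t : ℝ) (ht : 1 ≤ t) :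
    ∃ μt : Measure ℝ, IsProbabilityMeasure μt ∧
    ∃ ωt : ℂ → ℂ,
      DifferentiableOn ℂ ωt UHP ∧ Set.MapsTo ωt UHP UHP ∧ Set.InjOn ωt UHP ∧
      (∀ z ∈ UHP,
        Fmeas μt z = Fmeas μ (ωt z) ∧
        ωt z = z / (t : ℂ) + (1 - 1 / (t : ℂ)) * Fmeas μt z ∧
        (t : ℂ) * ωt z + (1 - (t : ℂ)) * Fmeas μ (ωt z) = z) := by
  rcases eq_or_lt_of_le ht with rfl | ht1
  · refine ⟨μ, inferInstance, id, differentiableOn_id, mapsTo_id _, injOn_id _, fun z _ => ?_⟩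
    simp
  obtain ⟨ω, hd, hm, hH⟩ := exists_omega μ ht
  obtain ⟨ν, hν, hG⟩ := exists_cauchyT_eq (fun z => cauchyT μ (ω z))
    ((differentiableOn_cauchyT μ).comp hd hm) (fun z hz => (im_cauchyT_neg μ (hm hz)).le)
    (tendsto_omega_I μ ht1 hm hH) (fun ε hε => tendsto_omega_cocompact μ ht hm hH hε)
  refine ⟨ν, hν, ω, hd, hm, fun z hz w hw h => ?_, fun z hz => ?_⟩
  · rw [← hH z hz, ← hH w hw, h]
  have h1 : Fmeas ν z = Fmeas μ (ω z) := by rw [Fmeas, Fmeas, hG z hz]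
  have h2 := hH z hz
  rw [Hmap] at h2
  refine ⟨h1, ?_, h2⟩
  rw [h1]
  have h3 : (t : ℂ) ≠ 0 := by
    have : t ≠ 0 := by linarith
    exact_mod_cast this
  field_simp
  linear_combination h2
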